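/- Let n ≥ 1 and σ ∈ (0,1). Let f ∈ C²(ℝⁿ) be bounded with bounded first and second derivatives, and suppose there exists C₀ > 0 such that whenever ‖x‖ ≤ ‖y‖ one has |f(y)| ≤ C₀ |f(x)| and sup_{|α|=2} |∂^α f(y)| ≤ C₀ sup_{|α|=2} |∂^α f(x)|. Then there exists C > 0 such that for every x with ‖x‖ > 1: |∫_{ℝⁿ} (2f(x) − f(x+y) − f(x−y)) ‖y‖^{−n−2σ} dy| ≤ C ‖x‖^{−n−2σ} ∫_{‖y‖ < 3‖x‖} |f(y)| dy + C |f(x)| ‖x‖^{−2σ} + C ‖x‖^{2−2σ} Σ_{|α|=2} |∂^α f(x/2)|, the integral on the left being absolutely convergent. -/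

import Mathlib

open MeasureTheory
open scoped BigOperators

/-- The second partial derivative `∂²f/∂x_i∂x_j (x)`. -/
noncomputable def secondPartial {n : ℕ} (f : EuclideanSpace ℝ (Fin n) → ℝ)
    (x : EuclideanSpace ℝ (Fin n)) (i j : Fin n) : ℝ :=
  fderiv ℝ (fderiv ℝ f) x (EuclideanSpace.single i 1) (EuclideanSpace.single j 1)

/-- `sup_{|α|=2} |∂^α f(x)|`, the supremum of the second partial derivatives at `x`. -/
noncomputable def secondSup {n : ℕ} (f : EuclideanSpace ℝ (Fin n) → ℝ)
    (x : EuclideanSpace ℝ (Fin n)) : ℝ :=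
  ⨆ i : Fin n, ⨆ j : Fin n, |secondPartial f x i j|

/-!
Split the integral at `‖y‖ = ‖x‖ / 2`. For smaller `y` the points `x ± y` have norm at least
`‖x / 2‖`, so decay of the second derivatives bounds the second difference by a multiple of
`‖y‖ ^ 2 * Σ |∂^α f(x / 2)|`, and `‖y‖ ^ (2 - n - 2σ)` is integrable near the origin. For larger `y`
the values `f (x ± y)` are at most `C₀ |f x|` unless `‖x ± y‖ < 3 ‖x‖`, and on that exceptional set
the kernel is at most a multiple of `‖x‖ ^ (-n - 2σ)`, which leaves a translate of the integral of
`|f|` over the ball of radius `3 ‖x‖`.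
-/

open Metric Module Set

section RadialPowers

lemma eqOn_pow_sub_one_smul_rpow {d : ℕ} (hd : 0 < d) (p : ℝ) :
    EqOn (fun t : ℝ ↦ t ^ (d - 1) • t ^ p) (· ^ (d + p - 1)) (Ioi 0) := by
  intro t ht
  simp only [smul_eq_mul]
  rw [← Real.rpow_natCast, ← Real.rpow_add ht, Nat.cast_pred hd, sub_add_eq_add_sub]

variable {E : Type*} [NormedAddCommGroup E] [NormedSpace ℝ E] [FiniteDimensional ℝ E]
  [Nontrivial E] [MeasurableSpace E] [BorelSpace E] (μ : Measure E) [μ.IsAddHaarMeasure]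

lemma integrableOn_fun_norm_preimage_iff {F : Type*} [NormedAddCommGroup F] [NormedSpace ℝ F]
    {s : Set ℝ} (hs : MeasurableSet s) {g : ℝ → F} :
    IntegrableOn (fun y : E ↦ g ‖y‖) (norm ⁻¹' s) μ ↔
      IntegrableOn (fun t : ℝ ↦ t ^ (finrank ℝ E - 1) • g t) (s ∩ Ioi 0) := by
  rw [← integrable_indicator_iff (measurable_norm (α := E) hs), ← integrableOn_indicator_iff hs,
    indicator_smul]
  exact integrable_fun_norm_addHaar μ (f := s.indicator g)

lemma setIntegral_fun_norm_preimage {F : Type*} [NormedAddCommGroup F] [NormedSpace ℝ F]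
    {s : Set ℝ} (hs : MeasurableSet s) (g : ℝ → F) :
    ∫ y in norm ⁻¹' s, g ‖y‖ ∂μ =
      μ.toSphere.real univ • ∫ t in Ioi 0 ∩ s, t ^ (finrank ℝ E - 1) • g t := by
  rw [← integral_indicator (measurable_norm (α := E) hs), ← setIntegral_indicator hs,
    indicator_smul, Measure.toSphere_real_apply_univ, mul_smul, Nat.cast_smul_eq_nsmul]
  exact integral_fun_norm_addHaar μ (s.indicator g)

lemma setIntegral_norm_rpow_ball {p r : ℝ} (hr : 0 < r) (hp : 0 < finrank ℝ E + p) :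
    ∫ y in ball 0 r, ‖y‖ ^ p ∂μ =
      μ.toSphere.real univ * (r ^ (finrank ℝ E + p) / (finrank ℝ E + p)) := by
  have hball : ball (0 : E) r = norm ⁻¹' Iio r := by ext; simp
  rw [hball, setIntegral_fun_norm_preimage μ measurableSet_Iio (· ^ p), Ioi_inter_Iio,
    setIntegral_congr_fun measurableSet_Ioo
      ((eqOn_pow_sub_one_smul_rpow finrank_pos p).mono Ioo_subset_Ioi_self),
    ← integral_Ioc_eq_integral_Ioo, ← intervalIntegral.integral_of_le hr.le,
    integral_rpow (Or.inl (by linarith)), sub_add_cancel, Real.zero_rpow hp.ne', sub_zero,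
    smul_eq_mul]

lemma integrableOn_norm_rpow_ball {p r : ℝ} (hp : 0 < finrank ℝ E + p) :
    IntegrableOn (fun y : E ↦ ‖y‖ ^ p) (ball 0 r) μ := by
  refine integrableOn_ball_of_norm_le_rpow (C := 1) (α := -p) finrank_pos (by linarith)
    (.of_forall fun y ↦ ?_) (measurable_norm.pow_const p).aestronglyMeasurable
  rw [neg_neg, one_mul, Real.norm_of_nonneg (by positivity)]

lemma integrableOn_norm_rpow_compl_ball {p r : ℝ} (hr : 0 < r) (hp : finrank ℝ E + p < 0) :
    IntegrableOn (fun y : E ↦ ‖y‖ ^ p) (ball 0 r)ᶜ μ := by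
  have hcompl : (ball (0 : E) r)ᶜ = norm ⁻¹' Ici r := by ext; simp
  have hsub : Ici r ⊆ Ioi 0 := Ici_subset_Ioi.2 hr
  rw [hcompl, integrableOn_fun_norm_preimage_iff μ measurableSet_Ici (g := (· ^ p)),
    inter_eq_left.2 hsub, integrableOn_congr_fun
      ((eqOn_pow_sub_one_smul_rpow finrank_pos p).mono hsub) measurableSet_Ici,
    integrableOn_Ici_iff_integrableOn_Ioi]
  exact integrableOn_Ioi_rpow_of_lt (by linarith) hr

lemma setIntegral_norm_rpow_compl_ball {p r : ℝ} (hr : 0 < r) (hp : finrank ℝ E + p < 0) :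
    ∫ y in (ball 0 r)ᶜ, ‖y‖ ^ p ∂μ =
      μ.toSphere.real univ * (r ^ (finrank ℝ E + p) / -(finrank ℝ E + p)) := by
  have hcompl : (ball (0 : E) r)ᶜ = norm ⁻¹' Ici r := by ext; simp
  have hsub : Ici r ⊆ Ioi 0 := Ici_subset_Ioi.2 hr
  rw [hcompl, setIntegral_fun_norm_preimage μ measurableSet_Ici (· ^ p), inter_eq_right.2 hsub,
    setIntegral_congr_fun measurableSet_Ici
      ((eqOn_pow_sub_one_smul_rpow finrank_pos p).mono hsub),
    integral_Ici_eq_integral_Ioi, integral_Ioi_rpow_of_lt (by linarith) hr, sub_add_cancel,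
    div_neg, neg_div, smul_eq_mul]

end RadialPowers

section SecondDifference

variable {E F : Type*} [NormedAddCommGroup F] [NormedSpace ℝ F]

section AddGroup

variable [AddGroup E]

/-- The negated centred second difference `2f(x) - f(x + y) - f(x - y)`, the numerator of the
singular integral defining the fractional Laplacian. -/
def secondDifference (f : E → F) (x y : E) : F :=
  (2 : ℝ) • f x - f (x + y) - f (x - y)

lemma norm_secondDifference_le (f : E → F) (x y : E) :
    ‖secondDifference f x y‖ ≤ 2 * ‖f x‖ + ‖f (x + y)‖ + ‖f (x - y)‖ := by
  calc ‖secondDifference f x y‖ ≤ ‖(2 : ℝ) • f x‖ + ‖f (x + y)‖ + ‖f (x - y)‖ :=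
        (norm_sub_le _ _).trans (add_le_add_left (norm_sub_le _ _) _)
    _ = 2 * ‖f x‖ + ‖f (x + y)‖ + ‖f (x - y)‖ := by rw [norm_smul, Real.norm_two]

@[simp]
lemma secondDifference_zero_right (f : E → F) (x : E) : secondDifference f x 0 = 0 := by
  simp [secondDifference, two_smul]

end AddGroup

variable [NormedAddCommGroup E] [NormedSpace ℝ E]

lemma norm_sub_le_of_norm_fderiv_le_ball {g : E → F} {x z : E} {r L : ℝ}
    (hg : ∀ w ∈ ball x r, DifferentiableAt ℝ g w) (hL : ∀ w ∈ ball x r, ‖fderiv ℝ g w‖ ≤ L)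
    (hz : z ∈ ball 0 r) : ‖g (x + z) - g (x - z)‖ ≤ L * (2 * ‖z‖) := by
  have hmem : x + z ∈ ball x r ∧ x - z ∈ ball x r := by simpa [dist_eq_norm] using hz
  have hdiff : x + z - (x - z) = (2 : ℝ) • z := by rw [two_smul]; abel
  calc ‖g (x + z) - g (x - z)‖ ≤ L * ‖x + z - (x - z)‖ :=
        (convex_ball x r).norm_image_sub_le_of_norm_fderiv_le hg hL hmem.2 hmem.1
    _ = L * (2 * ‖z‖) := by rw [hdiff, norm_smul, Real.norm_two]

lemma hasFDerivAt_secondDifference {f : E → F} {x z : E} (hadd : DifferentiableAt ℝ f (x + z))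
    (hsub : DifferentiableAt ℝ f (x - z)) :
    HasFDerivAt (secondDifference f x) (-(fderiv ℝ f (x + z) - fderiv ℝ f (x - z))) z := by
  have h₁ := hadd.hasFDerivAt.comp z ((hasFDerivAt_id z).const_add x)
  have h₂ := hsub.hasFDerivAt.comp z ((hasFDerivAt_id z).const_sub x)
  rw [ContinuousLinearMap.comp_id] at h₁
  rw [ContinuousLinearMap.comp_neg, ContinuousLinearMap.comp_id] at h₂
  rw [neg_sub', sub_neg_eq_add, ← sub_neg_eq_add]
  exact (h₁.const_sub _).sub h₂

lemma norm_secondDifference_le_of_norm_fderiv_fderiv_le {f : E → F} {x y : E} {r L : ℝ}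
    (hf : ∀ z ∈ ball x r, DifferentiableAt ℝ f z)
    (hf' : ∀ z ∈ ball x r, DifferentiableAt ℝ (fderiv ℝ f) z)
    (hL : ∀ z ∈ ball x r, ‖fderiv ℝ (fderiv ℝ f) z‖ ≤ L) (hy : y ∈ ball 0 r) :
    ‖secondDifference f x y‖ ≤ 2 * L * ‖y‖ ^ 2 := by
  have hyr : ‖y‖ < r := by simpa using hy
  have hball : ∀ z ∈ closedBall (0 : E) ‖y‖, z ∈ ball 0 r := fun z hz ↦
    closedBall_subset_ball hyr hz
  have hL₀ : 0 ≤ L :=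
    (norm_nonneg (fderiv ℝ (fderiv ℝ f) x)).trans
      (hL x (mem_ball_self ((norm_nonneg y).trans_lt hyr)))
  have hderiv : ∀ z ∈ closedBall (0 : E) ‖y‖, HasFDerivWithinAt (secondDifference f x)
      (-(fderiv ℝ f (x + z) - fderiv ℝ f (x - z))) (closedBall 0 ‖y‖) z := fun z hz ↦ by
    have hz' := hball z hz
    exact (hasFDerivAt_secondDifference (hf _ (by simpa [dist_eq_norm] using hz'))
      (hf _ (by simpa [dist_eq_norm] using hz'))).hasFDerivWithinAt
  have hbound : ∀ z ∈ closedBall (0 : E) ‖y‖,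
      ‖-(fderiv ℝ f (x + z) - fderiv ℝ f (x - z))‖ ≤ L * (2 * ‖y‖) := fun z hz ↦ by
    rw [norm_neg]
    have hzy : ‖z‖ ≤ ‖y‖ := by simpa using hz
    exact (norm_sub_le_of_norm_fderiv_le_ball hf' hL (hball z hz)).trans (by gcongr)
  calc ‖secondDifference f x y‖ = ‖secondDifference f x y - secondDifference f x 0‖ := by
        rw [secondDifference_zero_right, sub_zero]
    _ ≤ L * (2 * ‖y‖) * ‖y - 0‖ :=
        (convex_closedBall 0 ‖y‖).norm_image_sub_le_of_norm_hasFDerivWithin_le hderiv hbound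
          (by simp) (by simp)
    _ = 2 * L * ‖y‖ ^ 2 := by rw [sub_zero]; ring

end SecondDifference

section SingularIntegral

variable {E F : Type*} [NormedAddCommGroup E] [NormedSpace ℝ E]
  [NormedAddCommGroup F] [NormedSpace ℝ F]

/-- The integrand `(2f(x) - f(x + y) - f(x - y)) ‖y‖ ^ (-d - 2σ)`, `d = dim E`, whose integral over
`y` is `(-Δ)^σ f (x)` up to a positive constant. It vanishes at `y = 0`, whatever value the power
takes there. -/
noncomputable def fracLaplacianIntegrand (σ : ℝ) (f : E → F) (x y : E) : F :=
  ‖y‖ ^ (-(finrank ℝ E : ℝ) - 2 * σ) • secondDifference f x y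

lemma norm_fracLaplacianIntegrand (σ : ℝ) (f : E → F) (x y : E) :
    ‖fracLaplacianIntegrand σ f x y‖ =
      ‖y‖ ^ (-(finrank ℝ E : ℝ) - 2 * σ) * ‖secondDifference f x y‖ := by
  rw [fracLaplacianIntegrand, norm_smul, Real.norm_of_nonneg (by positivity)]

lemma norm_fracLaplacianIntegrand_le_of_mem_ball {σ : ℝ} {f : E → F} {x y : E} {r L : ℝ}
    (hf : ∀ z ∈ ball x r, DifferentiableAt ℝ f z)
    (hf' : ∀ z ∈ ball x r, DifferentiableAt ℝ (fderiv ℝ f) z)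
    (hL : ∀ z ∈ ball x r, ‖fderiv ℝ (fderiv ℝ f) z‖ ≤ L) (hy : y ∈ ball 0 r) :
    ‖fracLaplacianIntegrand σ f x y‖ ≤ 2 * L * ‖y‖ ^ (-(finrank ℝ E : ℝ) - 2 * σ + 2) := by
  have hdiff := norm_secondDifference_le_of_norm_fderiv_fderiv_le hf hf' hL hy
  rw [norm_fracLaplacianIntegrand]
  rcases eq_or_ne y 0 with rfl | hy₀
  · have hL₀ : 0 ≤ L :=
      (norm_nonneg (fderiv ℝ (fderiv ℝ f) x)).trans (hL x (by simpa using hy))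
    rw [secondDifference_zero_right, norm_zero, norm_zero, mul_zero]
    positivity
  · rw [Real.rpow_add (norm_pos_iff.2 hy₀), Real.rpow_two]
    calc ‖y‖ ^ (-(finrank ℝ E : ℝ) - 2 * σ) * ‖secondDifference f x y‖
        ≤ ‖y‖ ^ (-(finrank ℝ E : ℝ) - 2 * σ) * (2 * L * ‖y‖ ^ 2) := by gcongr
      _ = 2 * L * (‖y‖ ^ (-(finrank ℝ E : ℝ) - 2 * σ) * ‖y‖ ^ 2) := by ring

lemma norm_fracLaplacianIntegrand_le_of_notMem_ball {σ : ℝ} (hσ : 0 ≤ σ) {f : E → F} {x y : E}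
    {r A : ℝ} (hr : 0 < r) {g : E → ℝ} (hg : 0 ≤ g) (hfg : ∀ w, ‖f w‖ ≤ A + g w)
    (hy : y ∈ (ball 0 r)ᶜ) :
    ‖fracLaplacianIntegrand σ f x y‖ ≤
      2 * (‖f x‖ + A) * ‖y‖ ^ (-(finrank ℝ E : ℝ) - 2 * σ) +
        r ^ (-(finrank ℝ E : ℝ) - 2 * σ) * (g (x + y) + g (x - y)) := by
  have hry : r ≤ ‖y‖ := by simpa using hy
  have hpow : ‖y‖ ^ (-(finrank ℝ E : ℝ) - 2 * σ) ≤ r ^ (-(finrank ℝ E : ℝ) - 2 * σ) :=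
    Real.rpow_le_rpow_of_nonpos hr hry
      (by linarith [(Nat.cast_nonneg (finrank ℝ E) : (0 : ℝ) ≤ finrank ℝ E)])
  have hg₂ : 0 ≤ g (x + y) + g (x - y) := add_nonneg (hg _) (hg _)
  have hdiff : ‖secondDifference f x y‖ ≤ 2 * (‖f x‖ + A) + (g (x + y) + g (x - y)) := by
    linarith [norm_secondDifference_le f x y, hfg (x + y), hfg (x - y)]
  rw [norm_fracLaplacianIntegrand]
  calc ‖y‖ ^ (-(finrank ℝ E : ℝ) - 2 * σ) * ‖secondDifference f x y‖
      ≤ ‖y‖ ^ (-(finrank ℝ E : ℝ) - 2 * σ) *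
          (2 * (‖f x‖ + A) + (g (x + y) + g (x - y))) := by gcongr
    _ = 2 * (‖f x‖ + A) * ‖y‖ ^ (-(finrank ℝ E : ℝ) - 2 * σ) +
          ‖y‖ ^ (-(finrank ℝ E : ℝ) - 2 * σ) * (g (x + y) + g (x - y)) := by ring
    _ ≤ _ := by gcongr

variable [FiniteDimensional ℝ E] [MeasurableSpace E] [BorelSpace E] {μ : Measure E}
  [μ.IsAddHaarMeasure]

lemma aestronglyMeasurable_fracLaplacianIntegrand {f : E → F} (hf : AEStronglyMeasurable f μ)
    (σ : ℝ) (x : E) : AEStronglyMeasurable (fracLaplacianIntegrand σ f x) μ := by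
  have hadd := hf.comp_measurePreserving (measurePreserving_add_left μ x)
  have hsub := hf.comp_measurePreserving (Measure.measurePreserving_sub_left μ x)
  exact (measurable_norm.pow_const _).aestronglyMeasurable.smul
    ((aestronglyMeasurable_const.sub hadd).sub hsub)

lemma integrableOn_and_norm_setIntegral_ball_fracLaplacianIntegrand_le [Nontrivial E] {σ : ℝ}
    (hσ : σ < 1) {f : E → F} (hfm : AEStronglyMeasurable f μ) {x : E} {r L : ℝ} (hr : 0 < r)
    (hf : ∀ z ∈ ball x r, DifferentiableAt ℝ f z)
    (hf' : ∀ z ∈ ball x r, DifferentiableAt ℝ (fderiv ℝ f) z)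
    (hL : ∀ z ∈ ball x r, ‖fderiv ℝ (fderiv ℝ f) z‖ ≤ L) :
    IntegrableOn (fracLaplacianIntegrand σ f x) (ball 0 r) μ ∧
      ‖∫ y in ball 0 r, fracLaplacianIntegrand σ f x y ∂μ‖ ≤
        μ.toSphere.real univ / (1 - σ) * L * r ^ (2 - 2 * σ) := by
  have hexp : (finrank ℝ E : ℝ) + (-(finrank ℝ E : ℝ) - 2 * σ + 2) = 2 - 2 * σ := by ring
  have hpos : 0 < (finrank ℝ E : ℝ) + (-(finrank ℝ E : ℝ) - 2 * σ + 2) := by linarith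
  have hint := (integrableOn_norm_rpow_ball μ (r := r) hpos).const_mul (2 * L)
  have hle : ∀ᵐ y ∂μ.restrict (ball 0 r), ‖fracLaplacianIntegrand σ f x y‖ ≤
      2 * L * ‖y‖ ^ (-(finrank ℝ E : ℝ) - 2 * σ + 2) :=
    ae_restrict_of_forall_mem measurableSet_ball fun y hy ↦
      norm_fracLaplacianIntegrand_le_of_mem_ball hf hf' hL hy
  refine ⟨hint.mono' (aestronglyMeasurable_fracLaplacianIntegrand hfm σ x).restrict hle,
    (norm_integral_le_of_norm_le hint hle).trans_eq ?_⟩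
  have hσ₁ : 1 - σ ≠ 0 := by linarith
  rw [integral_const_mul, setIntegral_norm_rpow_ball μ hr hpos, hexp]
  field_simp

lemma integrableOn_and_norm_setIntegral_compl_ball_fracLaplacianIntegrand_le [Nontrivial E] {σ : ℝ}
    (hσ : 0 < σ) {f : E → F} (hfm : AEStronglyMeasurable f μ) (x : E) {r A : ℝ}
    (hr : 0 < r) {g : E → ℝ} (hg : 0 ≤ g) (hgi : Integrable g μ) (hfg : ∀ w, ‖f w‖ ≤ A + g w) :
    IntegrableOn (fracLaplacianIntegrand σ f x) (ball 0 r)ᶜ μ ∧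
      ‖∫ y in (ball 0 r)ᶜ, fracLaplacianIntegrand σ f x y ∂μ‖ ≤
        μ.toSphere.real univ / σ * (‖f x‖ + A) * r ^ (-2 * σ) +
          2 * r ^ (-(finrank ℝ E : ℝ) - 2 * σ) * ∫ w, g w ∂μ := by
  have hexp : (finrank ℝ E : ℝ) + (-(finrank ℝ E : ℝ) - 2 * σ) = -2 * σ := by ring
  have hneg : (finrank ℝ E : ℝ) + (-(finrank ℝ E : ℝ) - 2 * σ) < 0 := by linarith
  have hpow := (integrableOn_norm_rpow_compl_ball μ hr hneg).const_mul (2 * (‖f x‖ + A))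
  have hadd : Integrable (fun y ↦ g (x + y)) μ := hgi.comp_add_left x
  have hsub : Integrable (fun y ↦ g (x - y)) μ := hgi.comp_sub_left x
  have htrans : Integrable
      (fun y ↦ r ^ (-(finrank ℝ E : ℝ) - 2 * σ) * (g (x + y) + g (x - y))) μ :=
    (hadd.add hsub).const_mul _
  have hle : ∀ᵐ y ∂μ.restrict (ball 0 r)ᶜ, ‖fracLaplacianIntegrand σ f x y‖ ≤
      2 * (‖f x‖ + A) * ‖y‖ ^ (-(finrank ℝ E : ℝ) - 2 * σ) +
        r ^ (-(finrank ℝ E : ℝ) - 2 * σ) * (g (x + y) + g (x - y)) :=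
    ae_restrict_of_forall_mem measurableSet_ball.compl fun y hy ↦
      norm_fracLaplacianIntegrand_le_of_notMem_ball hσ.le hr hg hfg hy
  have hdom := hpow.fun_add htrans.integrableOn
  refine ⟨hdom.mono' (aestronglyMeasurable_fracLaplacianIntegrand hfm σ x).restrict hle,
    (norm_integral_le_of_norm_le hdom hle).trans ?_⟩
  rw [integral_add hpow htrans.integrableOn]
  gcongr ?_ + ?_
  · rw [integral_const_mul, setIntegral_norm_rpow_compl_ball μ hr hneg, hexp]
    apply le_of_eq
    field_simp
  · calc ∫ y in (ball 0 r)ᶜ, r ^ (-(finrank ℝ E : ℝ) - 2 * σ) * (g (x + y) + g (x - y)) ∂μ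
        ≤ ∫ y, r ^ (-(finrank ℝ E : ℝ) - 2 * σ) * (g (x + y) + g (x - y)) ∂μ :=
          setIntegral_le_integral htrans
            (.of_forall fun y ↦ mul_nonneg (by positivity) (add_nonneg (hg _) (hg _)))
      _ = 2 * r ^ (-(finrank ℝ E : ℝ) - 2 * σ) * ∫ w, g w ∂μ := by
          rw [integral_const_mul, integral_add hadd hsub, integral_add_left_eq_self g x,
            integral_sub_left_eq_self g μ x]
          ring

theorem integrable_and_norm_integral_fracLaplacianIntegrand_le [Nontrivial E] {σ : ℝ}
    (hσ : σ ∈ Ioo 0 1) {f : E → F} (hfm : AEStronglyMeasurable f μ) {x : E} {r L A : ℝ} (hr : 0 < r)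
    (hf : ∀ z ∈ ball x r, DifferentiableAt ℝ f z)
    (hf' : ∀ z ∈ ball x r, DifferentiableAt ℝ (fderiv ℝ f) z)
    (hL : ∀ z ∈ ball x r, ‖fderiv ℝ (fderiv ℝ f) z‖ ≤ L) {g : E → ℝ} (hg : 0 ≤ g)
    (hgi : Integrable g μ) (hfg : ∀ w, ‖f w‖ ≤ A + g w) :
    Integrable (fracLaplacianIntegrand σ f x) μ ∧
      ‖∫ y, fracLaplacianIntegrand σ f x y ∂μ‖ ≤
        μ.toSphere.real univ / (1 - σ) * L * r ^ (2 - 2 * σ) +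
          (μ.toSphere.real univ / σ * (‖f x‖ + A) * r ^ (-2 * σ) +
            2 * r ^ (-(finrank ℝ E : ℝ) - 2 * σ) * ∫ w, g w ∂μ) := by
  obtain ⟨hnear, hnear_le⟩ :=
    integrableOn_and_norm_setIntegral_ball_fracLaplacianIntegrand_le hσ.2 hfm hr hf hf' hL
  obtain ⟨hfar, hfar_le⟩ :=
    integrableOn_and_norm_setIntegral_compl_ball_fracLaplacianIntegrand_le hσ.1 hfm x hr hg hgi hfg
  have hint : Integrable (fracLaplacianIntegrand σ f x) μ := by
    rw [← integrableOn_univ, ← union_compl_self (ball 0 r)]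
    exact hnear.union hfar
  refine ⟨hint, ?_⟩
  rw [← integral_add_compl measurableSet_ball hint]
  exact (norm_add_le _ _).trans (add_le_add hnear_le hfar_le)

end SingularIntegral

section SecondDerivative

lemma opNorm_le_sum_norm_apply_orthonormalBasis {ι E F : Type*} [Fintype ι]
    [NormedAddCommGroup E] [InnerProductSpace ℝ E] [NormedAddCommGroup F] [NormedSpace ℝ F]
    (b : OrthonormalBasis ι ℝ E) (T : E →L[ℝ] F) : ‖T‖ ≤ ∑ i, ‖T (b i)‖ := by
  refine T.opNorm_le_bound (by positivity) fun u ↦ ?_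
  calc ‖T u‖ = ‖∑ i, b.repr u i • T (b i)‖ := by
        conv_lhs => rw [← b.sum_repr u, map_sum]
        simp only [map_smul]
    _ ≤ ∑ i, ‖u‖ * ‖T (b i)‖ := norm_sum_le_of_le _ fun i _ ↦ by
        rw [norm_smul]
        gcongr
        simpa using PiLp.norm_apply_le (b.repr u) i
    _ = (∑ i, ‖T (b i)‖) * ‖u‖ := by rw [← Finset.mul_sum, mul_comm]

variable {n : ℕ} (f : EuclideanSpace ℝ (Fin n) → ℝ) (x : EuclideanSpace ℝ (Fin n))

lemma norm_fderiv_fderiv_le_sum_abs_secondPartial :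
    ‖fderiv ℝ (fderiv ℝ f) x‖ ≤ ∑ i, ∑ j, |secondPartial f x i j| := by
  have hbasis := fun {G : Type} [NormedAddCommGroup G] [NormedSpace ℝ G] ↦
    opNorm_le_sum_norm_apply_orthonormalBasis (F := G) (EuclideanSpace.basisFun (Fin n) ℝ)
  refine (hbasis _).trans (Finset.sum_le_sum fun i _ ↦ (hbasis _).trans_eq ?_)
  simp [secondPartial]

lemma abs_secondPartial_le_secondSup (i j : Fin n) : |secondPartial f x i j| ≤ secondSup f x :=
  (le_ciSup (f := fun j ↦ |secondPartial f x i j|) (finite_range _).bddAbove j).trans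
    (le_ciSup (f := fun i ↦ ⨆ j, |secondPartial f x i j|) (finite_range _).bddAbove i)

lemma norm_fderiv_fderiv_le_secondSup :
    ‖fderiv ℝ (fderiv ℝ f) x‖ ≤ (n : ℝ) ^ 2 * secondSup f x := by
  calc ‖fderiv ℝ (fderiv ℝ f) x‖ ≤ ∑ i, ∑ j, |secondPartial f x i j| :=
        norm_fderiv_fderiv_le_sum_abs_secondPartial f x
    _ ≤ ∑ _i : Fin n, ∑ _j : Fin n, secondSup f x := by
        gcongr
        exact abs_secondPartial_le_secondSup f x _ _
    _ = (n : ℝ) ^ 2 * secondSup f x := by simp; ring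

lemma secondSup_le_sum_abs_secondPartial :
    secondSup f x ≤ ∑ i, ∑ j, |secondPartial f x i j| := by
  have hrow (i : Fin n) : ⨆ j, |secondPartial f x i j| ≤ ∑ j, |secondPartial f x i j| :=
    Real.iSup_le (fun j ↦ Finset.single_le_sum (f := fun j ↦ |secondPartial f x i j|)
      (fun _ _ ↦ abs_nonneg _) (Finset.mem_univ j)) (by positivity)
  exact Real.iSup_le (fun i ↦ (hrow i).trans (Finset.single_le_sum
    (f := fun i ↦ ∑ j, |secondPartial f x i j|) (fun _ _ ↦ by positivity) (Finset.mem_univ i)))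
      (by positivity)

end SecondDerivative

lemma half_rpow_le {t a b : ℝ} (ht : 0 ≤ t) (hab : -a ≤ b) : (t / 2) ^ a ≤ 2 ^ b * t ^ a := by
  rw [Real.div_rpow ht zero_le_two, div_eq_inv_mul, ← Real.rpow_neg zero_le_two]
  gcongr
  exact one_le_two

section Decay

lemma norm_le_add_indicator_ball {E F : Type*} [SeminormedAddCommGroup E]
    [SeminormedAddCommGroup F] {f : E → F} {x : E} {A ρ : ℝ}
    (hA : ∀ y, ‖x‖ ≤ ‖y‖ → ‖f y‖ ≤ A) (hρ : ‖x‖ ≤ ρ) (w : E) :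
    ‖f w‖ ≤ A + (ball 0 ρ).indicator (fun y ↦ ‖f y‖) w := by
  by_cases hw : w ∈ ball 0 ρ
  · rw [indicator_of_mem hw]
    exact le_add_of_nonneg_left ((norm_nonneg _).trans (hA x le_rfl))
  · rw [indicator_of_notMem hw, add_zero]
    exact hA w (hρ.trans (by simpa using hw))

variable {n : ℕ} {f : EuclideanSpace ℝ (Fin n) → ℝ} {C₀ : ℝ} {x : EuclideanSpace ℝ (Fin n)}

lemma fracLaplacianIntegrand_euclideanSpace (σ : ℝ) (f : EuclideanSpace ℝ (Fin n) → ℝ)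
    (x : EuclideanSpace ℝ (Fin n)) :
    fracLaplacianIntegrand σ f x =
      fun y ↦ (2 * f x - f (x + y) - f (x - y)) * ‖y‖ ^ (-(n : ℝ) - 2 * σ) := by
  ext y
  simp [fracLaplacianIntegrand, secondDifference, mul_comm]

lemma norm_fderiv_fderiv_le_of_mem_ball_half_norm (hC₀ : 0 ≤ C₀)
    (hsecond : ∀ y, ‖(2 : ℝ)⁻¹ • x‖ ≤ ‖y‖ → secondSup f y ≤ C₀ * secondSup f ((2 : ℝ)⁻¹ • x))
    {z : EuclideanSpace ℝ (Fin n)} (hz : z ∈ ball x (‖x‖ / 2)) :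
    ‖fderiv ℝ (fderiv ℝ f) z‖ ≤
      (n : ℝ) ^ 2 * (C₀ * ∑ i, ∑ j, |secondPartial f ((2 : ℝ)⁻¹ • x) i j|) := by
  have hxz : ‖(2 : ℝ)⁻¹ • x‖ ≤ ‖z‖ := by
    rw [norm_smul, norm_inv, Real.norm_two]
    linarith [norm_sub_norm_le x z, mem_ball_iff_norm'.1 hz]
  calc ‖fderiv ℝ (fderiv ℝ f) z‖ ≤ (n : ℝ) ^ 2 * secondSup f z :=
        norm_fderiv_fderiv_le_secondSup f z
    _ ≤ (n : ℝ) ^ 2 * (C₀ * secondSup f ((2 : ℝ)⁻¹ • x)) := by gcongr; exact hsecond z hxz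
    _ ≤ _ := by gcongr; exact secondSup_le_sum_abs_secondPartial f _

lemma integrable_and_norm_integral_fracLaplacianIntegrand_le_of_decay {σ : ℝ}
    (hσ : σ ∈ Ioo 0 1) (hf : ContDiff ℝ 2 f) (hC₀ : 0 ≤ C₀)
    (hdecay : ∀ y, ‖x‖ ≤ ‖y‖ → |f y| ≤ C₀ * |f x|)
    (hsecond : ∀ y, ‖(2 : ℝ)⁻¹ • x‖ ≤ ‖y‖ → secondSup f y ≤ C₀ * secondSup f ((2 : ℝ)⁻¹ • x))
    (hx : x ≠ 0) {ρ : ℝ} (hρ : ‖x‖ ≤ ρ) :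
    Integrable (fracLaplacianIntegrand σ f x) ∧
      ‖∫ y, fracLaplacianIntegrand σ f x y‖ ≤
        (volume : Measure (EuclideanSpace ℝ (Fin n))).toSphere.real univ / (1 - σ) *
            ((n : ℝ) ^ 2 * (C₀ * ∑ i, ∑ j, |secondPartial f ((2 : ℝ)⁻¹ • x) i j|)) *
              (‖x‖ / 2) ^ (2 - 2 * σ) +
          ((volume : Measure (EuclideanSpace ℝ (Fin n))).toSphere.real univ / σ *
              (|f x| + C₀ * |f x|) * (‖x‖ / 2) ^ (-2 * σ) +
            2 * (‖x‖ / 2) ^ (-(n : ℝ) - 2 * σ) * ∫ y in ball 0 ρ, |f y|) := by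
  have : Nontrivial (EuclideanSpace ℝ (Fin n)) := nontrivial_of_ne x 0 hx
  have hf' : ContDiff ℝ 1 (fderiv ℝ f) := hf.fderiv_right (by norm_num)
  have hint : Integrable ((ball 0 ρ).indicator fun y ↦ |f y|) :=
    ((hf.continuous.abs.locallyIntegrable.integrableOn_isCompact
      (isCompact_closedBall 0 ρ)).mono_set ball_subset_closedBall).integrable_indicator
        measurableSet_ball
  simpa only [integral_indicator measurableSet_ball, finrank_euclideanSpace_fin, Real.norm_eq_abs]
    using integrable_and_norm_integral_fracLaplacianIntegrand_le (μ := volume) hσ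
      hf.continuous.aestronglyMeasurable (half_pos (norm_pos_iff.2 hx))
      (fun z _ ↦ hf.differentiable two_ne_zero z)
      (fun z _ ↦ hf'.differentiable one_ne_zero z)
      (fun _ hz ↦ norm_fderiv_fderiv_le_of_mem_ball_half_norm hC₀ hsecond hz)
      (fun _ ↦ indicator_nonneg (fun _ _ ↦ abs_nonneg _) _) hint
      (norm_le_add_indicator_ball hdecay hρ)

end Decay

theorem fractional_laplacian_pointwise_estimate_general (n : ℕ) {σ : ℝ}
    (hσ : σ ∈ Ioo (0 : ℝ) 1) {C₀ : ℝ} (hC₀ : 0 < C₀) :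
    ∃ C > (0 : ℝ), ∀ f : EuclideanSpace ℝ (Fin n) → ℝ, ContDiff ℝ 2 f →
      (∀ x y : EuclideanSpace ℝ (Fin n), ‖x‖ ≤ ‖y‖ → |f y| ≤ C₀ * |f x|) →
      (∀ x y : EuclideanSpace ℝ (Fin n), ‖x‖ ≤ ‖y‖ → secondSup f y ≤ C₀ * secondSup f x) →
      ∀ x : EuclideanSpace ℝ (Fin n), x ≠ 0 →
        Integrable (fun y ↦ (2 * f x - f (x + y) - f (x - y)) * ‖y‖ ^ (-(n : ℝ) - 2 * σ)) ∧
        |∫ y, (2 * f x - f (x + y) - f (x - y)) * ‖y‖ ^ (-(n : ℝ) - 2 * σ)|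
          ≤ C * ‖x‖ ^ (-(n : ℝ) - 2 * σ) * (∫ y in ball 0 (3 * ‖x‖), |f y|)
            + C * |f x| * ‖x‖ ^ (-(2 : ℝ) * σ)
            + C * ‖x‖ ^ (2 - 2 * σ) * ∑ i, ∑ j, |secondPartial f ((2 : ℝ)⁻¹ • x) i j| := by
  obtain ⟨hσ₀, hσ₁⟩ := hσ
  set ω := (volume : Measure (EuclideanSpace ℝ (Fin n))).toSphere.real univ
  set b : ℝ := n + 2 * σ with hb
  have hn : (0 : ℝ) ≤ n := n.cast_nonneg
  have hnear : 0 ≤ ω / (1 - σ) * (n ^ 2 * C₀) :=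
    mul_nonneg (div_nonneg measureReal_nonneg (sub_nonneg.2 hσ₁.le)) (by positivity)
  have hfar : 0 ≤ ω / σ * (1 + C₀) := by positivity
  set K := ω / (1 - σ) * (n ^ 2 * C₀) + ω / σ * (1 + C₀) + 2 with hK
  refine ⟨2 ^ b * K, by positivity, fun f hf hmono hmono2 x hx ↦ ?_⟩
  obtain ⟨hint, hle⟩ :=
    integrable_and_norm_integral_fracLaplacianIntegrand_le_of_decay ⟨hσ₀, hσ₁⟩ hf hC₀.le
      (hmono x) (hmono2 _) hx (ρ := 3 * ‖x‖) (by linarith [norm_nonneg x])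
  rw [fracLaplacianIntegrand_euclideanSpace] at hint hle
  refine ⟨hint, hle.trans ?_⟩
  set I := ∫ y in ball 0 (3 * ‖x‖), |f y|
  have : 0 ≤ I := integral_nonneg fun _ ↦ abs_nonneg _
  set S := ∑ i, ∑ j, |secondPartial f ((2 : ℝ)⁻¹ • x) i j|
  calc _ = ω / (1 - σ) * (n ^ 2 * C₀) * S * (‖x‖ / 2) ^ (2 - 2 * σ) +
        (ω / σ * (1 + C₀) * |f x| * (‖x‖ / 2) ^ (-2 * σ) +
          2 * (‖x‖ / 2) ^ (-(n : ℝ) - 2 * σ) * I) := by ring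
    _ ≤ K * S * (2 ^ b * ‖x‖ ^ (2 - 2 * σ)) + (K * |f x| * (2 ^ b * ‖x‖ ^ (-2 * σ)) +
          K * (2 ^ b * ‖x‖ ^ (-(n : ℝ) - 2 * σ)) * I) := by
        gcongr <;> first
          | linarith only [hK, hnear, hfar]
          | exact half_rpow_le (norm_nonneg x) (by linarith only [hb, hn])
    _ = _ := by ring

/-- Pointwise estimate for the singular-integral representation of the fractional
Laplacian `(-Δ)^σ f` (up to a positive constant) of a bounded `C²` function `f` with
bounded derivatives whose size and second derivatives decay monotonically in `‖x‖`. -/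
theorem fractional_laplacian_pointwise_estimate
    (n : ℕ) (hn : 1 ≤ n) (σ : ℝ) (hσ : σ ∈ Set.Ioo (0:ℝ) 1)
    (f : EuclideanSpace ℝ (Fin n) → ℝ) (hf : ContDiff ℝ 2 f)
    (hfb : ∃ M, ∀ y, |f y| ≤ M)
    (hf1b : ∃ M, ∀ y, ‖fderiv ℝ f y‖ ≤ M)
    (hf2b : ∃ M, ∀ y, ‖fderiv ℝ (fderiv ℝ f) y‖ ≤ M)
    (C₀ : ℝ) (hC₀ : 0 < C₀)
    (hmono : ∀ x y : EuclideanSpace ℝ (Fin n), ‖x‖ ≤ ‖y‖ → |f y| ≤ C₀ * |f x|)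
    (hmono2 : ∀ x y : EuclideanSpace ℝ (Fin n), ‖x‖ ≤ ‖y‖ → secondSup f y ≤ C₀ * secondSup f x) :
    ∃ C > (0:ℝ), ∀ x : EuclideanSpace ℝ (Fin n), 1 < ‖x‖ →
      Integrable (fun y : EuclideanSpace ℝ (Fin n) =>
        (2 * f x - f (x + y) - f (x - y)) * ‖y‖ ^ (-(n : ℝ) - 2 * σ)) ∧
      |∫ y : EuclideanSpace ℝ (Fin n),
          (2 * f x - f (x + y) - f (x - y)) * ‖y‖ ^ (-(n : ℝ) - 2 * σ)|
        ≤ C * ‖x‖ ^ (-(n : ℝ) - 2 * σ)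
              * (∫ y in Metric.ball (0 : EuclideanSpace ℝ (Fin n)) (3 * ‖x‖), |f y|)
          + C * |f x| * ‖x‖ ^ (-(2:ℝ) * σ)
          + C * ‖x‖ ^ (2 - 2 * σ)
              * ∑ i : Fin n, ∑ j : Fin n, |secondPartial f ((2:ℝ)⁻¹ • x) i j| := by
  obtain ⟨C, hC, hle⟩ := fractional_laplacian_pointwise_estimate_general n hσ hC₀
  exact ⟨C, hC, fun x hx ↦ hle f hf hmono hmono2 x (norm_pos_iff.1 (one_pos.trans hx))⟩
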